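/- Let (t_1…t_N)^∞ ∈ {0,1}^ℕ be a periodic sequence whose minimal period is N ≥ 2. If σ^n((t_1…t_N)^∞) ≽ (t_1…t_N)^∞ for all n ≥ 0, then t_{j+1}…t_N ≻ t_1…t_{N−j} for all 1 ≤ j < N. -/

import Mathlib

open Set Filter MeasureTheory

/-- The β-transformation `x ↦ βx (mod 1)`. -/
noncomputable def Tbeta (β x : ℝ) : ℝ := Int.fract (β * x)

/-- The survivor set `K_β(t) = {x ∈ [0,1) : T_β^n x ≥ t for all n ≥ 0}`. -/
def Kset (β t : ℝ) : Set ℝ := {x | x ∈ Set.Ico (0 : ℝ) 1 ∧ ∀ n : ℕ, t ≤ (Tbeta β)^[n] x}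

/-- Strict lexicographic order on sequences of naturals. -/
def seqLt (x y : ℕ → ℕ) : Prop := ∃ n, (∀ i, i < n → x i = y i) ∧ x n < y n

/-- Lexicographic order on sequences of naturals. -/
def seqLe (x y : ℕ → ℕ) : Prop := x = y ∨ seqLt x y

/-- The `n`-th iterate of the left shift. -/
def shiftN (n : ℕ) (x : ℕ → ℕ) : ℕ → ℕ := fun i => x (i + n)

/-- The sequence `w 0^∞`. -/
def wordSeq (w : List ℕ) : ℕ → ℕ := fun i => w.getD i 0

/-- The periodic sequence `w^∞`. -/
def perSeq (w : List ℕ) : ℕ → ℕ := fun i => w.getD (i % w.length) 0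

/-- The sequence obtained by concatenating the word `w` with the sequence `x`. -/
def catSeq (w : List ℕ) (x : ℕ → ℕ) : ℕ → ℕ :=
  fun i => if i < w.length then w.getD i 0 else x (i - w.length)

/-- The greedy β-expansion of `t`: the digit `b_{i+1}` is `⌊β T_β^i t⌋`. -/
noncomputable def greedy (β t : ℝ) : ℕ → ℕ := fun i => (⌊β * (Tbeta β)^[i] t⌋).toNat

/-- `d` is the quasi-greedy β-expansion of `1`: the lexicographically largest
sequence in `{0,1}^ℕ` not ending in `0^∞` whose digits sum to `1` in base `β`. -/
def IsQuasiGreedy (β : ℝ) (d : ℕ → ℕ) : Prop :=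
  (∀ i, d i ≤ 1) ∧ (¬ ∃ N, ∀ n, N ≤ n → d n = 0) ∧
  (∑' i : ℕ, (d i : ℝ) / β ^ (i + 1) = 1) ∧
  ∀ e : ℕ → ℕ, (∀ i, e i ≤ 1) → (¬ ∃ N, ∀ n, N ≤ n → e n = 0) →
    (∑' i : ℕ, (e i : ℝ) / β ^ (i + 1) = 1) → seqLe e d

/-- `s = s_1…s_p` is a β-Lyndon word: `s_{i+1}…s_p ≻ s_1…s_{p-i}` for `1 ≤ i < p`
and `σ^n(s^∞) ≺ δ(β)` for all `n ≥ 0`. -/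
def IsBetaLyndon (β : ℝ) (s : List ℕ) : Prop :=
  s ≠ [] ∧ (∀ a ∈ s, a ≤ 1) ∧
  (∀ i, 1 ≤ i → i < s.length →
    seqLt (wordSeq (s.take (s.length - i))) (wordSeq (s.drop i))) ∧
  (∀ d : ℕ → ℕ, IsQuasiGreedy β d → ∀ n : ℕ, seqLt (shiftN n (perSeq s)) d)

/-- Left endpoint `t_L = Σ_{i=1}^p s_i β^{-i}` of the β-Lyndon interval generated by `s`. -/
noncomputable def lyndonLeft (β : ℝ) (s : List ℕ) : ℝ :=
  ∑ i ∈ Finset.range s.length, (s.getD i 0 : ℝ) / β ^ (i + 1)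

/-- Right endpoint `t_R = (β^p/(β^p - 1)) t_L` of the β-Lyndon interval generated by `s`. -/
noncomputable def lyndonRight (β : ℝ) (s : List ℕ) : ℝ :=
  β ^ s.length / (β ^ s.length - 1) * lyndonLeft β s

/-- The union of all β-Lyndon intervals `[t_L, t_R)`. -/
noncomputable def lyndonUnionIco (β : ℝ) : Set ℝ :=
  ⋃ s ∈ {s : List ℕ | IsBetaLyndon β s}, Set.Ico (lyndonLeft β s) (lyndonRight β s)

/-- The symbolic survivor set `K̃_β(t)` with upper bound sequence `d = δ(β)`. -/
def Ktilde (β t : ℝ) (d : ℕ → ℕ) : Set (ℕ → ℕ) :=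
  {x | (∀ i, x i ≤ 1) ∧ ∀ n : ℕ, seqLe (greedy β t) (shiftN n x) ∧ seqLe (shiftN n x) d}

/-- The set-valued bifurcation set `E_β`. -/
def Eset (β : ℝ) : Set ℝ :=
  {t | t ∈ Set.Ico (0 : ℝ) 1 ∧ ∀ t', t < t' → t' < 1 → Kset β t' ≠ Kset β t}

/-- The dimension bifurcation set `B_β`. -/
def Bset (β : ℝ) : Set ℝ :=
  {t | t ∈ Set.Ico (0 : ℝ) 1 ∧ ∀ t', t < t' → t' < 1 → dimH (Kset β t') ≠ dimH (Kset β t)}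

/-- `β` is a multinacci number: `β^{m+1} = β^m + ⋯ + β + 1` for some `m ≥ 1`. -/
def IsMultinacci (β : ℝ) : Prop :=
  ∃ m : ℕ, 1 ≤ m ∧ β ^ (m + 1) = ∑ i ∈ Finset.range (m + 1), β ^ i

/-!
Write `x` for the periodic sequence and `N` for its period. Minimality of `N` makes `x ≼ σ^j x`
strict. If the first difference came after `N - j` symbols, deleting this common prefix
would give `σ^(N-j) x ≺ σ^N x = x`, contradicting `x ≼ σ^(N-j) x`. So the difference occurs while
both sequences are still reading the word, where they spell `t_1…t_{N-j}` and `t_{j+1}…t_N`.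
-/

theorem seqLt_iff_toLex_lt {x y : ℕ → ℕ} : seqLt x y ↔ toLex x < toLex y :=
  Iff.rfl

theorem seqLe_iff_toLex_le {x y : ℕ → ℕ} : seqLe x y ↔ toLex x ≤ toLex y := by
  rw [le_iff_eq_or_lt, toLex_inj]
  exact or_congr_right seqLt_iff_toLex_lt

theorem seqLe.not_seqLt {x y : ℕ → ℕ} (hle : seqLe x y) : ¬seqLt y x :=
  seqLt_iff_toLex_lt.not.2 (seqLe_iff_toLex_le.1 hle).not_gt

theorem seqLt.shiftN_of_prefix_eq {x y : ℕ → ℕ} {m : ℕ} (hlt : seqLt x y)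
    (heq : ∀ i < m, x i = y i) : seqLt (shiftN m x) (shiftN m y) := by
  obtain ⟨n, hbefore, hn⟩ := hlt
  have hmn : m ≤ n := not_lt.1 fun hnm => hn.ne (heq n hnm)
  refine ⟨n - m, fun i hi => hbefore (i + m) (by omega), ?_⟩
  simpa only [shiftN, Nat.sub_add_cancel hmn] using hn

theorem shiftN_shiftN (m n : ℕ) (x : ℕ → ℕ) : shiftN m (shiftN n x) = shiftN (m + n) x :=
  funext fun i => congrArg x (add_assoc i m n)

theorem shiftN_length_perSeq (w : List ℕ) : shiftN w.length (perSeq w) = perSeq w := by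
  funext i
  simp only [shiftN, perSeq, Nat.add_mod_right]

theorem perSeq_eq_wordSeq {w : List ℕ} {i : ℕ} (hi : i < w.length) :
    perSeq w i = wordSeq w i := by
  rw [perSeq, wordSeq, Nat.mod_eq_of_lt hi]

theorem wordSeq_take {w : List ℕ} {m i : ℕ} (hi : i < m) :
    wordSeq (w.take m) i = wordSeq w i := by
  simp only [wordSeq, List.getD_eq_getElem?_getD, List.getElem?_take_of_lt hi]

theorem wordSeq_drop (w : List ℕ) (j : ℕ) : wordSeq (w.drop j) = shiftN j (wordSeq w) := by
  funext i
  simp only [wordSeq, shiftN, List.getD_eq_getElem?_getD, List.getElem?_drop, add_comm]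

theorem exists_lt_sub_of_seqLt_shiftN {x : ℕ → ℕ} {N j : ℕ} (hj : j ≤ N)
    (hper : shiftN N x = x) (hle : seqLe x (shiftN (N - j) x)) (hlt : seqLt x (shiftN j x)) :
    ∃ n < N - j, (∀ i < n, x i = shiftN j x i) ∧ x n < shiftN j x n := by
  have ⟨n, hbefore, hn⟩ := hlt
  refine ⟨n, ?_, hbefore, hn⟩
  by_contra! hlate
  have hshift : seqLt (shiftN (N - j) x) (shiftN (N - j) (shiftN j x)) :=
    hlt.shiftN_of_prefix_eq fun i hi => hbefore i (hi.trans_le hlate)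
  rw [shiftN_shiftN, Nat.sub_add_cancel hj, hper] at hshift
  exact hle.not_seqLt hshift

theorem seqLt_take_drop_of_perSeq_lt {w : List ℕ} {j n : ℕ} (hn : n < w.length - j)
    (hbefore : ∀ i < n, perSeq w i = shiftN j (perSeq w) i)
    (hlt : perSeq w n < shiftN j (perSeq w) n) :
    seqLt (wordSeq (w.take (w.length - j))) (wordSeq (w.drop j)) := by
  have htake : ∀ i < w.length - j, wordSeq (w.take (w.length - j)) i = perSeq w i :=
    fun i hi => by rw [wordSeq_take hi, perSeq_eq_wordSeq (by omega)]
  have hdrop : ∀ i < w.length - j, wordSeq (w.drop j) i = shiftN j (perSeq w) i :=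
    fun i hi => by rw [wordSeq_drop, shiftN, shiftN, perSeq_eq_wordSeq (by omega)]
  refine ⟨n, fun i hi => ?_, ?_⟩
  · rw [htake i (hi.trans hn), hdrop i (hi.trans hn), hbefore i hi]
  · rwa [htake n hn, hdrop n hn]

theorem stmt_7_general (w : List ℕ)
    (hmin : ∀ k, 0 < k → k < w.length → shiftN k (perSeq w) ≠ perSeq w)
    (h : ∀ n : ℕ, seqLe (perSeq w) (shiftN n (perSeq w))) :
    ∀ j, 1 ≤ j → j < w.length →
      seqLt (wordSeq (w.take (w.length - j))) (wordSeq (w.drop j)) := by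
  intro j hj_pos hj_lt
  have hlt : seqLt (perSeq w) (shiftN j (perSeq w)) :=
    (h j).resolve_left (hmin j hj_pos hj_lt).symm
  obtain ⟨n, hn, hbefore, hlt_at⟩ :=
    exists_lt_sub_of_seqLt_shiftN hj_lt.le (shiftN_length_perSeq w) (h (w.length - j)) hlt
  exact seqLt_take_drop_of_perSeq_lt hn hbefore hlt_at

/-- Let `(t_1…t_N)^∞ ∈ {0,1}^ℕ` have minimal period `N ≥ 2`.
If `σ^n((t_1…t_N)^∞) ≽ (t_1…t_N)^∞` for all `n ≥ 0`, then
`t_{j+1}…t_N ≻ t_1…t_{N-j}` for all `1 ≤ j < N`. -/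
theorem stmt_7 (w : List ℕ) (hlen : 2 ≤ w.length) (hbin : ∀ a ∈ w, a ≤ 1)
    (hmin : ∀ k, 0 < k → k < w.length → shiftN k (perSeq w) ≠ perSeq w)
    (h : ∀ n : ℕ, seqLe (perSeq w) (shiftN n (perSeq w))) :
    ∀ j, 1 ≤ j → j < w.length →
      seqLt (wordSeq (w.take (w.length - j))) (wordSeq (w.drop j)) :=
  stmt_7_general w hmin h
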